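/- arXiv:1301.5206 — 2 statements merged into one kernel-verified Lean document; each statement's English description precedes it below -/
import Mathlib

section
/- Let C be an abelian category and (A, B) a cotorsion pair in C such that A is generating (every object of C is a quotient of an object of A) and B is cogenerating (every object of C embeds into an object of B). Then the following are equivalent: (1) Extⁿ_C(A, B) = 0 for all A ∈ A, B ∈ B and all n ≥ 1; (2) Ext²_C(A, B) = 0 for all A ∈ A and B ∈ B; (3) for every epimorphism f : A₁ → A₂ with A₁, A₂ ∈ A, also ker f ∈ A; (4) for every monomorphism g : B₁ → B₂ with B₁, B₂ ∈ B, also coker g ∈ B. -/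
open CategoryTheory CategoryTheory.Limits

universe w v u

variable {C : Type u} [Category.{v} C] [Abelian C]

/-- `Ext¹(A, B) = 0`, phrased as: every short exact sequence `0 → B → E → A → 0`
splits. -/
def Ext1Zero (A B : C) : Prop :=
  ∀ (E : C) (i : B ⟶ E) (p : E ⟶ A) (w : i ≫ p = 0),
    (ShortComplex.mk i p w).ShortExact → ∃ s : A ⟶ E, s ≫ p = 𝟙 A

/-- The right `Ext¹`-orthogonal class `S^⊥` of a class of objects `S`. -/
def rightPerp (S : Set C) : Set C := {B | ∀ A ∈ S, Ext1Zero A B}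

/-- The left `Ext¹`-orthogonal class `⊥S` of a class of objects `S`. -/
def leftPerp (S : Set C) : Set C := {A | ∀ B ∈ S, Ext1Zero A B}

/-- `(𝓐, 𝓑)` is a cotorsion pair: `𝓐 = ⊥𝓑` and `𝓑 = 𝓐^⊥`. -/
structure IsCotorsionPair (𝓐 𝓑 : Set C) : Prop where
  left_eq : 𝓐 = leftPerp 𝓑
  right_eq : 𝓑 = rightPerp 𝓐

/-!
A class in `Extⁿ(X, Y)` with `n ≥ 1` is killed by pulling back along some epimorphism `P ⟶ X`.
Hence classes in `Ext¹` come from short exact sequences, which identifies `Ext1Zero` with the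
vanishing of `Ext¹`, and dimension shifting is possible even when `C` has neither enough
projectives nor enough injectives.

The conditions are proved equivalent in the cycle (1) ⟹ (2) ⟹ (4) ⟹ (3) ⟹ (1). The step
(2) ⟹ (4) is a long exact sequence, and (3) ⟹ (1) is dimension shifting along epimorphisms from
objects of `𝓐`. For (4) ⟹ (3), let `K` be the kernel of an epimorphism `A₁ ⟶ A₂` in `𝓐`. An
extension of `K` by `B ∈ 𝓑` is killed by a monomorphism from `B` to an object of `𝓑`, so it comes
from a morphism `K ⟶ B''` to the cokernel, which lies in `𝓑`. This morphism extends to `A₁` because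
`Ext¹(A₂, B'') = 0`, so the extension is pulled back from a class in `Ext¹(A₁, B) = 0`.
-/

open Abelian

section Effaceability

open HomologicalComplex DerivedCategory

lemma epi_cyclesMap_of_quasiIsoAt_to_single {ι : Type*} [DecidableEq ι] {c : ComplexShape ι}
    {K : HomologicalComplex C c} {X : C} {i : ι} (π : K ⟶ (single C c i).obj X) [QuasiIsoAt π i] :
    Epi (cyclesMap π i) := by
  have : Epi (cyclesMap π i ≫ (singleObjCyclesSelfIso c i X).hom) := by
    rw [← homologyπ_singleObjHomologySelfIso_hom, ← homologyπ_naturality_assoc]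
    infer_instance
  simpa using this

lemma exists_epi_single_map_factors_of_quasiIsoAt {ι : Type*} [DecidableEq ι] {c : ComplexShape ι}
    {K : HomologicalComplex C c} {X : C} {i : ι} (π : K ⟶ (single C c i).obj X) [QuasiIsoAt π i] :
    ∃ (P : C) (p : P ⟶ X) (s : (single C c i).obj P ⟶ K), Epi p ∧ s ≫ π = (single C c i).map p := by
  have := epi_cyclesMap_of_quasiIsoAt_to_single π
  refine ⟨K.cycles i, cyclesMap π i ≫ (singleObjCyclesSelfIso c i X).hom,
    mkHomFromSingle (K.iCycles i) (by simp), inferInstance, ?_⟩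
  apply from_single_hom_ext
  simp [single_map_f_self, singleObjCyclesSelfIso_hom]

lemma exists_epi_singleFunctor_map_comp_eq_zero [HasDerivedCategory.{w} C] {X : C}
    {L : CochainComplex C ℤ} {i : ℤ} (hL : IsZero (L.X i))
    (φ : (singleFunctor C i).obj X ⟶ Q.obj L) :
    ∃ (P : C) (p : P ⟶ X), Epi p ∧ (singleFunctor C i).map p ≫ φ = 0 := by
  obtain ⟨K, π, hπ, g, rfl⟩ := right_fac (X := (single C (.up ℤ) i).obj X) φ
  have : QuasiIso π := (isIso_Q_map_iff_quasiIso _ π).1 hπ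
  obtain ⟨P, p, s, hp, hs⟩ := exists_epi_single_map_factors_of_quasiIsoAt π
  have hsg : s ≫ g = 0 := from_single_hom_ext (hL.eq_of_tgt _ _)
  refine ⟨P, p, hp, ?_⟩
  change Q.map ((single C _ i).map p) ≫ _ = 0
  rw [← hs, Q.map_comp, Category.assoc, IsIso.hom_inv_id_assoc, ← Q.map_comp, hsg, Q.map_zero]

lemma exists_epi_mk₀_comp_eq_zero [HasExt.{w} C] {X Y : C} {n : ℕ} (hn : n ≠ 0)
    (x : Ext.{w} X Y n) :
    ∃ (P : C) (p : P ⟶ X), Epi p ∧ (Ext.mk₀ p).comp x (zero_add n) = 0 := by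
  let := HasDerivedCategory.standard C
  let e := ((singleFunctors C).shiftIso (n : ℤ) (-n) 0 (by lia)).app Y
  obtain ⟨P, p, hp, hpx⟩ := exists_epi_singleFunctor_map_comp_eq_zero
    (L := (CochainComplex.singleFunctor C (-n)).obj Y)
    (isZero_single_obj_X _ _ _ _ (by lia)) (x.hom ≫ e.hom)
  refine ⟨P, p, hp, ?_⟩
  ext
  rw [← Ext.singleFunctor_map_comp_hom, Ext.zero_hom, ← cancel_mono e.hom, Category.assoc,
    zero_comp]
  exact hpx

end Effaceability

section Extensions

lemma shortExact_kernel {X Y : C} (f : X ⟶ Y) [Epi f] :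
    (ShortComplex.mk _ _ (kernel.condition f)).ShortExact where
  exact := ShortComplex.exact_kernel f

lemma shortExact_cokernel {X Y : C} (f : X ⟶ Y) [Mono f] :
    (ShortComplex.mk _ _ (cokernel.condition f)).ShortExact where
  exact := ShortComplex.exact_cokernel f

lemma shortExact_of_isPushout {S : ShortComplex C} (hS : S.ShortExact) {Y E : C} {f : S.X₁ ⟶ Y}
    {j : S.X₂ ⟶ E} {i : Y ⟶ E} (sq : IsPushout S.f f j i) {q : E ⟶ S.X₃} (hj : j ≫ q = S.g)
    (hi : i ≫ q = 0) : (ShortComplex.mk i q hi).ShortExact := by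
  have := hS.mono_f
  have := hS.epi_g
  have : Mono i := (MorphismProperty.monomorphisms C).of_isPushout sq.flip ‹Mono S.f›
  have : Epi q := epi_of_epi_fac hj
  refine { exact := ?_ }
  rw [ShortComplex.exact_iff_exact_up_to_refinements]
  intro T t ht
  obtain ⟨T₁, π₁, _, a, b, hab⟩ := sq.hom_eq_add_up_to_refinements t
  have ha : a ≫ S.g = 0 := by
    simpa [ht, hj, hi] using (hab =≫ q).symm
  obtain ⟨T₂, π₂, _, a', ha'⟩ := hS.exact.exact_up_to_refinements a ha
  refine ⟨T₂, π₂ ≫ π₁, inferInstance, a' ≫ f + π₂ ≫ b, ?_⟩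
  simp [hab, reassoc_of% ha', sq.w]

variable [HasExt.{w} C]

lemma exists_extClass_eq {X Y : C} (x : Ext.{w} X Y 1) :
    ∃ (E : C) (i : Y ⟶ E) (q : E ⟶ X) (hiq : i ≫ q = 0)
      (h : (ShortComplex.mk i q hiq).ShortExact), h.extClass = x := by
  obtain ⟨P, p, _, hpx⟩ := exists_epi_mk₀_comp_eq_zero one_ne_zero x
  have hS := shortExact_kernel p
  obtain ⟨y, rfl⟩ := Ext.contravariant_sequence_exact₃ hS Y x hpx (n₀ := 0) rfl
  obtain ⟨f, rfl⟩ := (Ext.mk₀_bijective _ _).2 y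
  let sq := IsPushout.of_hasPushout (kernel.ι p) f
  have hT := shortExact_of_isPushout hS sq (sq.inl_desc p 0 (by simp)) (sq.inr_desc p 0 (by simp))
  refine ⟨_, _, _, _, hT, ?_⟩
  simpa using (hS.extClass_naturality hT
    { τ₁ := f, τ₂ := pushout.inl _ _, τ₃ := 𝟙 X, comm₁₂ := sq.w.symm }).symm

lemma extClass_eq_zero_iff_exists_section {S : ShortComplex C} (hS : S.ShortExact) :
    hS.extClass = (0 : Ext.{w} _ _ _) ↔ ∃ s : S.X₃ ⟶ S.X₂, s ≫ S.g = 𝟙 S.X₃ := by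
  constructor
  · intro h
    obtain ⟨y, hy⟩ := Ext.covariant_sequence_exact₃ S.X₃ hS (Ext.mk₀ (𝟙 S.X₃)) (n₁ := 1) rfl
      (by simp [h])
    obtain ⟨s, rfl⟩ := (Ext.mk₀_bijective _ _).2 y
    exact ⟨s, (Ext.mk₀_bijective _ _).1 (by simpa using hy)⟩
  · rintro ⟨s, hs⟩
    rw [← Ext.mk₀_id_comp hS.extClass, ← hs, ← Ext.mk₀_comp_mk₀_assoc, hS.comp_extClass,
      Ext.comp_zero]

lemma ext1Zero_iff_subsingleton_ext {A B : C} :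
    Ext1Zero A B ↔ Subsingleton (Ext.{w} A B 1) := by
  constructor
  · intro h
    refine subsingleton_of_forall_eq 0 fun x ↦ ?_
    obtain ⟨E, i, q, hiq, hE, rfl⟩ := exists_extClass_eq x
    exact (extClass_eq_zero_iff_exists_section hE).2 (h E i q hiq hE)
  · intro _ E i q hiq hE
    exact (extClass_eq_zero_iff_exists_section.{w} hE).1 (Subsingleton.elim _ _)

lemma mem_leftPerp_iff {𝓑 : Set C} {A : C} :
    A ∈ leftPerp 𝓑 ↔ ∀ B ∈ 𝓑, Subsingleton (Ext.{w} A B 1) :=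
  forall₂_congr fun _ _ ↦ ext1Zero_iff_subsingleton_ext

lemma mem_rightPerp_iff {𝓐 : Set C} {B : C} :
    B ∈ rightPerp 𝓐 ↔ ∀ A ∈ 𝓐, Subsingleton (Ext.{w} A B 1) :=
  forall₂_congr fun _ _ ↦ ext1Zero_iff_subsingleton_ext

end Extensions

section Orthogonality

lemma X₃_mem_rightPerp_of_shortExact [HasExt.{w} C] {𝓐 : Set C} {S : ShortComplex C}
    (hS : S.ShortExact) (h₁ : ∀ A ∈ 𝓐, Subsingleton (Ext.{w} A S.X₁ 2)) (h₂ : S.X₂ ∈ rightPerp 𝓐) :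
    S.X₃ ∈ rightPerp 𝓐 := by
  rw [mem_rightPerp_iff.{w}] at h₂ ⊢
  intro A hA
  have := h₁ A hA
  have := h₂ A hA
  refine subsingleton_of_forall_eq 0 fun x ↦ ?_
  obtain ⟨y, rfl⟩ := Ext.covariant_sequence_exact₃ A hS x (n₁ := 2) rfl (Subsingleton.elim _ _)
  rw [Subsingleton.elim y 0, Ext.zero_comp]

lemma X₁_mem_leftPerp_of_shortExact {𝓑 : Set C} (hcogen : ∀ X : C, ∃ B ∈ 𝓑, ∃ i : X ⟶ B, Mono i)
    (hcoker : ∀ (B₁ B₂ : C) (g : B₁ ⟶ B₂), Mono g → B₁ ∈ 𝓑 → B₂ ∈ 𝓑 → cokernel g ∈ 𝓑)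
    {S : ShortComplex C} (hS : S.ShortExact) (h₂ : S.X₂ ∈ leftPerp 𝓑) (h₃ : S.X₃ ∈ leftPerp 𝓑) :
    S.X₁ ∈ leftPerp 𝓑 := by
  have := HasExt.standard C
  rw [mem_leftPerp_iff] at h₂ h₃ ⊢
  intro B hB
  refine subsingleton_of_forall_eq 0 fun x ↦ ?_
  obtain ⟨E, i, q, hiq, hE, hx⟩ := exists_extClass_eq x
  have := hE.mono_f
  obtain ⟨B', hB', k, _⟩ := hcogen E
  have hxk : x.comp (Ext.mk₀ (i ≫ k)) (add_zero 1) = 0 := by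
    rw [← hx, ← Ext.mk₀_comp_mk₀, ← Ext.comp_assoc_of_third_deg_zero, hE.extClass_comp,
      Ext.zero_comp]
  have hT := shortExact_cokernel (i ≫ k)
  obtain ⟨y, rfl⟩ := Ext.covariant_sequence_exact₁ S.X₁ hT x hxk (n₀ := 0) rfl
  have := h₃ _ (hcoker _ _ (i ≫ k) inferInstance hB hB')
  obtain ⟨z, rfl⟩ := Ext.contravariant_sequence_exact₁ hS _ y (n₁ := 1) rfl (Subsingleton.elim _ _)
  have := h₂ B hB
  rw [Ext.comp_assoc_of_second_deg_zero, Subsingleton.elim (z.comp hT.extClass _) 0, Ext.comp_zero]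

lemma subsingleton_ext_succ_of_generating [HasExt.{w} C] {𝓐 : Set C}
    (hgen : ∀ X : C, ∃ A ∈ 𝓐, ∃ p : A ⟶ X, Epi p)
    (hker : ∀ (A₁ A₂ : C) (f : A₁ ⟶ A₂), Epi f → A₁ ∈ 𝓐 → A₂ ∈ 𝓐 → kernel f ∈ 𝓐)
    {A B : C} (hA : A ∈ 𝓐) (hB : B ∈ rightPerp 𝓐) (n : ℕ) :
    Subsingleton (Ext.{w} A B (n + 1)) := by
  induction n generalizing A with
  | zero => exact mem_rightPerp_iff.1 hB A hA
  | succ n ih =>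
    refine subsingleton_of_forall_eq 0 fun x ↦ ?_
    obtain ⟨P, p, _, hpx⟩ := exists_epi_mk₀_comp_eq_zero (by lia) x
    obtain ⟨A', hA', p', _⟩ := hgen P
    have hx : (Ext.mk₀ (p' ≫ p)).comp x (zero_add _) = 0 := by
      rw [← Ext.mk₀_comp_mk₀_assoc, hpx, Ext.comp_zero]
    obtain ⟨y, rfl⟩ := Ext.contravariant_sequence_exact₃ (shortExact_kernel (p' ≫ p)) B x hx
      (n₀ := n + 1) (by lia)
    have := ih (hker _ _ (p' ≫ p) inferInstance hA' hA)
    rw [Subsingleton.elim y 0, Ext.comp_zero]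

end Orthogonality

/-- Let `C` be an abelian category and `(𝓐, 𝓑)` a cotorsion pair such that `𝓐` is
generating and `𝓑` is cogenerating.  Then the following are equivalent:
(1) `Extⁿ_C(A, B) = 0` for all `A ∈ 𝓐`, `B ∈ 𝓑` and all `n ≥ 1`;
(2) `Ext²_C(A, B) = 0` for all `A ∈ 𝓐` and `B ∈ 𝓑`;
(3) for every epimorphism `f : A₁ → A₂` with `A₁, A₂ ∈ 𝓐`, also `ker f ∈ 𝓐`;
(4) for every monomorphism `g : B₁ → B₂` with `B₁, B₂ ∈ 𝓑`, also `coker g ∈ 𝓑`. -/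
theorem stmt_9 [HasExt.{w} C] (𝓐 𝓑 : Set C) (hpair : IsCotorsionPair 𝓐 𝓑)
    (hgen : ∀ X : C, ∃ A ∈ 𝓐, ∃ p : A ⟶ X, Epi p)
    (hcogen : ∀ X : C, ∃ B ∈ 𝓑, ∃ i : X ⟶ B, Mono i) :
    ((∀ A ∈ 𝓐, ∀ B ∈ 𝓑, ∀ n : ℕ, 1 ≤ n → Subsingleton (Abelian.Ext.{w} A B n)) ↔
      (∀ A ∈ 𝓐, ∀ B ∈ 𝓑, Subsingleton (Abelian.Ext.{w} A B 2))) ∧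
    ((∀ A ∈ 𝓐, ∀ B ∈ 𝓑, Subsingleton (Abelian.Ext.{w} A B 2)) ↔
      (∀ (A₁ A₂ : C) (f : A₁ ⟶ A₂), Epi f → A₁ ∈ 𝓐 → A₂ ∈ 𝓐 → kernel f ∈ 𝓐)) ∧
    ((∀ (A₁ A₂ : C) (f : A₁ ⟶ A₂), Epi f → A₁ ∈ 𝓐 → A₂ ∈ 𝓐 → kernel f ∈ 𝓐) ↔
      (∀ (B₁ B₂ : C) (g : B₁ ⟶ B₂), Mono g → B₁ ∈ 𝓑 → B₂ ∈ 𝓑 → cokernel g ∈ 𝓑)) := by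
  have h₁₂ (h : ∀ A ∈ 𝓐, ∀ B ∈ 𝓑, ∀ n : ℕ, 1 ≤ n → Subsingleton (Ext.{w} A B n)) :
      ∀ A ∈ 𝓐, ∀ B ∈ 𝓑, Subsingleton (Ext.{w} A B 2) :=
    fun A hA B hB ↦ h A hA B hB 2 one_le_two
  have h₂₄ (h : ∀ A ∈ 𝓐, ∀ B ∈ 𝓑, Subsingleton (Ext.{w} A B 2)) (B₁ B₂ : C) (g : B₁ ⟶ B₂)
      (_ : Mono g) (hB₁ : B₁ ∈ 𝓑) (hB₂ : B₂ ∈ 𝓑) : cokernel g ∈ 𝓑 :=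
    hpair.right_eq ▸ X₃_mem_rightPerp_of_shortExact (shortExact_cokernel g)
      (fun A hA ↦ h A hA B₁ hB₁) (hpair.right_eq ▸ hB₂)
  have h₄₃ (h : ∀ (B₁ B₂ : C) (g : B₁ ⟶ B₂), Mono g → B₁ ∈ 𝓑 → B₂ ∈ 𝓑 → cokernel g ∈ 𝓑)
      (A₁ A₂ : C) (f : A₁ ⟶ A₂) (_ : Epi f) (hA₁ : A₁ ∈ 𝓐) (hA₂ : A₂ ∈ 𝓐) : kernel f ∈ 𝓐 :=
    hpair.left_eq ▸ X₁_mem_leftPerp_of_shortExact hcogen h (shortExact_kernel f)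
      (hpair.left_eq ▸ hA₁) (hpair.left_eq ▸ hA₂)
  have h₃₁ (h : ∀ (A₁ A₂ : C) (f : A₁ ⟶ A₂), Epi f → A₁ ∈ 𝓐 → A₂ ∈ 𝓐 → kernel f ∈ 𝓐) :
      ∀ A ∈ 𝓐, ∀ B ∈ 𝓑, ∀ n : ℕ, 1 ≤ n → Subsingleton (Ext.{w} A B n)
    | A, hA, B, hB, n + 1, _ =>
      subsingleton_ext_succ_of_generating hgen h hA (hpair.right_eq ▸ hB) n
  exact ⟨⟨h₁₂, h₃₁ ∘ h₄₃ ∘ h₂₄⟩, ⟨h₄₃ ∘ h₂₄, h₁₂ ∘ h₃₁⟩, ⟨h₂₄ ∘ h₁₂ ∘ h₃₁, h₄₃⟩⟩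
end

section
/- (Neeman.) Let R be a ring and X a cochain complex of flat right R-modules. Then there exists a degreewise short exact sequence of cochain complexes 0 → W → P → X → 0 such that every component Pⁿ is a projective R-module and W is an acyclic complex of flat R-modules all of whose cycle modules Zⁿ(W) = ker(Wⁿ → W^{n+1}) are flat. -/
open CategoryTheory CategoryTheory.Limits

universe u

/-- Flatness of a left module over an arbitrary (possibly noncommutative) ring,
expressed via the standard equational criterion, which is equivalent to the exactness
of the tensor product functor with `M`: whenever `∑ xⱼ • mⱼ = 0` with `xⱼ ∈ R`,
`mⱼ ∈ M`, there are `yᵢ ∈ M` and `aⱼᵢ ∈ R` with `mⱼ = ∑ᵢ aⱼᵢ • yᵢ` for all `j` and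
`∑ⱼ xⱼ * aⱼᵢ = 0` for all `i`. -/
def IsFlat (R : Type u) [Ring R] (M : Type u) [AddCommGroup M] [Module R M] : Prop :=
  ∀ (k : ℕ) (x : Fin k → R) (m : Fin k → M), (∑ j, x j • m j) = 0 →
    ∃ (l : ℕ) (a : Fin k → Fin l → R) (y : Fin l → M),
      (∀ j, m j = ∑ i, a j i • y i) ∧ ∀ i, (∑ j, x j * a j i) = 0

/-! Choose a degreewise projective complex `P₀` with an epimorphism `P₀ ⟶ X`. Its kernel `K` is
degreewise flat, and by Salce's trick it is enough to embed `K` into an acyclic complex `W` with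
flat cycles such that the cokernel is degreewise projective: the pushout of `P₀` along `K ⟶ W` is
then degreewise projective, and its quotient by `W` is still `X`.

To build `W`, note that a complex is acyclic with flat cycles as soon as every finite family of
cycles is `a ≫ w ≫ d`, where `a` is a matrix annihilated by any prescribed linear relations among
the cycles. Flatness of `Kⁿ` alone factors the family as `a ≫ y` for some family `y` in `Kⁿ`, so
that `y ≫ d` is annihilated by `a`. Attaching to `K` free generators whose boundaries are the `y`,
up to terms that `a` annihilates, makes the family a boundary. Iterating this and passing to the
colimit gives `W`. -/

section Projective

variable {C : Type*} [Category* C]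

lemma projective_of_llp_epimorphisms [HasZeroMorphisms C] [HasZeroObject C] {P Q : C} {f : P ⟶ Q}
    (hf : (MorphismProperty.epimorphisms C).llp f) (hP : Projective P) : Projective Q :=
  (projective_iff_llp_epimorphisms_of_isZero _ (isZero_zero C)).2
    ((MorphismProperty.epimorphisms C).llp.comp_mem _ _
      ((projective_iff_llp_epimorphisms_zero P).1 hP) hf)

lemma llp_epimorphisms_of_splitting [Preadditive C] {S : ShortComplex C} (σ : S.Splitting)
    (hS : Projective S.X₃) : (MorphismProperty.epimorphisms C).llp S.f := by
  intro A B p (hp : Epi p)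
  refine ⟨fun {a b} sq => ⟨⟨?_⟩⟩⟩
  exact {
    l := σ.r ≫ a + S.g ≫ Projective.factorThru (σ.s ≫ b) p
    fac_left := by simp
    fac_right := calc
      (σ.r ≫ a + S.g ≫ Projective.factorThru (σ.s ≫ b) p) ≫ p
      _ = (σ.r ≫ S.f + S.g ≫ σ.s) ≫ b := by simp [sq.w]
      _ = b := by rw [σ.id, Category.id_comp] }

lemma llp_epimorphisms_inr_f [Preadditive C] [HasBinaryBiproducts C] {F K : CochainComplex C ℤ}
    (φ : F ⟶ K) (hF : ∀ n, Projective (F.X n)) (n : ℤ) :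
    (MorphismProperty.epimorphisms C).llp ((CochainComplex.mappingCone.inr φ).f n) :=
  llp_epimorphisms_of_splitting
    (CochainComplex.mappingCone.triangleRotateShortComplexSplitting φ n) (hF (n + 1))

lemma projective_double_X [HasZeroMorphisms C] [HasZeroObject C] {ι : Type*} {c : ComplexShape ι}
    {i₀ i₁ : ι} {P₀ P₁ : C} [Projective P₀] [Projective P₁] (f : P₀ ⟶ P₁) (h : c.Rel i₀ i₁)
    (n : ι) : Projective ((HomologicalComplex.double f h).X n) := by
  unfold HomologicalComplex.double
  dsimp only
  split_ifs <;> infer_instance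

lemma projective_sigma {J : Type*} (P : J → C) [HasCoproduct P] (hP : ∀ j, Projective (P j)) :
    Projective (∐ P) where
  factors f e _ := ⟨Sigma.desc fun j => Projective.factorThru (Sigma.ι P j ≫ f) e,
    Sigma.hom_ext _ _ fun j => by simp⟩

lemma projective_sigma_X [HasZeroMorphisms C] {ι J : Type*} [HasCoproductsOfShape J C]
    {c : ComplexShape ι} (D : J → HomologicalComplex C c) (n : ι)
    (hD : ∀ j, Projective ((D j).X n)) : Projective ((∐ D).X n) :=
  Projective.of_iso (PreservesCoproduct.iso (HomologicalComplex.eval C c n) D).symm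
    (projective_sigma _ hD)

lemma exists_epi_of_projective_X [Abelian C] [EnoughProjectives C] [HasCoproductsOfShape ℤ C]
    (X : CochainComplex C ℤ) :
    ∃ (P : CochainComplex C ℤ) (p : P ⟶ X), Epi p ∧ ∀ n, Projective (P.X n) := by
  have hn (n : ℤ) : (ComplexShape.up ℤ).Rel n (n + 1) := rfl
  let D n := HomologicalComplex.double (𝟙 (Projective.over (X.X n))) (hn n)
  let p n : D n ⟶ X := HomologicalComplex.mkHomFromDouble (hn n) (by simp) (Projective.π (X.X n))
    (Projective.π (X.X n) ≫ X.d n (n + 1)) (by simp) (by simp)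
  have epi_p n : Epi ((p n).f n) := by
    rw [HomologicalComplex.mkHomFromDouble_f₀]
    infer_instance
  refine ⟨∐ D, Sigma.desc p, HomologicalComplex.epi_of_epi_f _ fun n => ?_,
    fun n => projective_sigma_X D n fun m => projective_double_X _ _ n⟩
  have : Epi ((Sigma.ι D n).f n ≫ (Sigma.desc p).f n) := by
    rw [← HomologicalComplex.comp_f, Sigma.ι_desc]
    exact epi_p n
  exact epi_of_epi ((Sigma.ι D n).f n) _

end Projective

lemma shortExact_of_isPushout_s16 {C : Type*} [Category* C] [Abelian C] {A B W P X : C} {i : A ⟶ B}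
    {p : B ⟶ X} {j : A ⟶ W} {f : W ⟶ P} {h : B ⟶ P} {g : P ⟶ X} (sq : IsPushout i j h f)
    {w : i ≫ p = 0} (hp : (ShortComplex.mk i p w).ShortExact) (hg : h ≫ g = p)
    (hfg : f ≫ g = 0) : (ShortComplex.mk f g hfg).ShortExact := by
  have : Mono i := hp.mono_f
  have : Epi p := hp.epi_g
  have : Mono f := (MorphismProperty.monomorphisms C).of_isPushout sq.flip (.infer_property i)
  have : Epi g := epi_of_epi_fac hg
  let desc {T : C} (t : P ⟶ T) (ht : f ≫ t = 0) : { l : X ⟶ T // g ≫ l = t } := by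
    have hit : i ≫ h ≫ t = 0 := by rw [sq.w_assoc, ht, comp_zero]
    refine ⟨hp.exact.desc (h ≫ t) hit, sq.hom_ext ?_ ?_⟩
    · rw [reassoc_of% hg]
      exact hp.exact.g_desc _ hit
    · rw [reassoc_of% hfg, zero_comp, ht]
  have hcokernel := CokernelCofork.IsColimit.ofπ' g hfg desc
  exact { exact := ShortComplex.exact_of_g_is_cokernel _ hcokernel }

section Flat

variable {R : Type u} [Ring R]

variable (R) in
/-- The free module of rank `k`. A system of `j` linear relations satisfied by a family of `k`
elements of `M` is an equation `r ≫ m = 0` with `r : finiteFree R j ⟶ finiteFree R k` and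
`m : finiteFree R k ⟶ M`. -/
abbrev finiteFree (k : ℕ) : ModuleCat.{u} R := ModuleCat.of R (Fin k → R)

/-- The morphism from a free module with given values on the standard basis. -/
noncomputable abbrev finiteFreeDesc {k : ℕ} {M : ModuleCat.{u} R} (m : Fin k → M) :
    finiteFree R k ⟶ M :=
  ModuleCat.ofHom (Fintype.linearCombination R m)

lemma finiteFreeDesc_single {k : ℕ} {M : ModuleCat.{u} R} (m : finiteFree R k ⟶ M) :
    finiteFreeDesc (fun j => m (Pi.single j 1)) = m := by
  ext j
  simp

attribute [local instance] Cardinal.fact_isRegular_aleph0 in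
instance isFinitelyPresentable_finiteFree (k : ℕ) : IsFinitelyPresentable.{u} (finiteFree R k) := by
  have : (forget (ModuleCat.{u} R)).IsFinitelyAccessible :=
    Functor.isFinitelyAccessible_iff_preservesFilteredColimits.2 inferInstance
  have : IsFinitelyPresentable.{u} (ULift.{u} (Fin k)) :=
    (Types.isCardinalPresentable_iff _).2 (hasCardinalLT_of_finite _ _ le_rfl)
  have := (ModuleCat.adj R).isCardinalPresentable_leftAdjoint_obj Cardinal.aleph0.{u}
    (ULift.{u} (Fin k))
  let e : (ModuleCat.free R).obj (ULift.{u} (Fin k)) ≅ finiteFree R k :=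
    ((Finsupp.linearEquivFunOnFinite R R _).trans
      (LinearEquiv.funCongrLeft R R Equiv.ulift.symm)).toModuleIso
  exact isCardinalPresentable_of_iso e _

attribute [local instance] Cardinal.fact_isRegular_aleph0 in
instance preservesColimitsOfShape_coyoneda_finiteFree {J : Type*} [Category* J]
    [EssentiallySmall.{u} J] [IsFiltered J] (k : ℕ) :
    PreservesColimitsOfShape J (coyoneda.obj (Opposite.op (finiteFree R k))) :=
  have := (isCardinalFiltered_aleph0_iff J).2 ‹_›
  preservesColimitsOfShape_of_isCardinalPresentable_of_essentiallySmall _ Cardinal.aleph0.{u} J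

lemma IsFlat.exists_factorization_of_apply_eq_zero {M : ModuleCat.{u} R} (hM : IsFlat R M) {k : ℕ}
    (m : finiteFree R k ⟶ M) (x : finiteFree R k) (hx : m x = 0) :
    ∃ (l : ℕ) (a : finiteFree R k ⟶ finiteFree R l) (y : finiteFree R l ⟶ M),
      a ≫ y = m ∧ a x = 0 := by
  rw [← finiteFreeDesc_single m] at hx
  obtain ⟨l, a, y, hm, ha⟩ := hM k x _ hx
  refine ⟨l, finiteFreeDesc a, finiteFreeDesc y, ?_, ?_⟩
  · ext j
    simp [hm, Fintype.linearCombination_apply]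
  · ext i
    exact (by simp [Fintype.linearCombination_apply] : _ = ∑ j, x j * a j i).trans (ha i)

lemma IsFlat.exists_factorization_of_finset {M : ModuleCat.{u} R} (hM : IsFlat R M) {k : ℕ}
    (m : finiteFree R k ⟶ M) (S : Finset (finiteFree R k)) (hS : ∀ x ∈ S, m x = 0) :
    ∃ (l : ℕ) (a : finiteFree R k ⟶ finiteFree R l) (y : finiteFree R l ⟶ M),
      a ≫ y = m ∧ ∀ x ∈ S, a x = 0 := by
  classical
  induction S using Finset.induction_on with
  | empty => exact ⟨k, 𝟙 _, m, by simp, by simp⟩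
  | insert x S _ ih =>
    obtain ⟨hx, hS⟩ := Finset.forall_mem_insert _ _ _ |>.1 hS
    obtain ⟨l, a, y, rfl, haS⟩ := ih hS
    obtain ⟨l', b, z, rfl, hb⟩ := hM.exists_factorization_of_apply_eq_zero y (a x) hx
    exact ⟨l', a ≫ b, z, by simp, by simpa [hb] using fun s hs => by simp [haS s hs]⟩

lemma isFlat_iff_exists_factorization {M : ModuleCat.{u} R} :
    IsFlat R M ↔ ∀ ⦃j k : ℕ⦄ (r : finiteFree R j ⟶ finiteFree R k) (m : finiteFree R k ⟶ M),
      r ≫ m = 0 → ∃ (l : ℕ) (a : finiteFree R k ⟶ finiteFree R l) (y : finiteFree R l ⟶ M),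
        a ≫ y = m ∧ r ≫ a = 0 := by
  classical
  refine ⟨fun hM j k r m h => ?_, fun hM k x m h => ?_⟩
  · obtain ⟨l, a, y, hm, ha⟩ := hM.exists_factorization_of_finset m
      (Finset.univ.image fun i => r (Pi.single i 1))
      (by simpa using fun i => congr($h (Pi.single i 1)))
    refine ⟨l, a, y, hm, ?_⟩
    ext i : 3
    simpa using ha (r (Pi.single i 1)) (by simp)
  · obtain ⟨l, a, y, hm, ha⟩ := hM (finiteFreeDesc fun _ : Fin 1 => x) (finiteFreeDesc m)
      (by ext i; simp [Fintype.linearCombination_apply, h])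
    refine ⟨l, fun j => a (Pi.single j 1), fun i => y (Pi.single i 1), fun j => ?_, fun i => ?_⟩
    · rw [← finiteFreeDesc_single y] at hm
      simpa [Fintype.linearCombination_apply] using congr($hm (Pi.single j 1)).symm
    · rw [← finiteFreeDesc_single a] at ha
      have h : _ = (0 : R) := congr($ha (Pi.single 0 1) i)
      simpa [Fintype.linearCombination_apply] using h

lemma IsFlat.of_projective (P : ModuleCat.{u} R) [Projective P] : IsFlat R P := by
  classical
  obtain ⟨s, hs⟩ := Module.projective_def.1 ((IsProjective.iff_projective (R := R) P).2 ‹_›)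
  intro k x m h
  let S : Finset P := Finset.univ.biUnion fun j => (s (m j)).support
  refine ⟨S.card, fun j i => s (m j) (S.equivFin.symm i), fun i => S.equivFin.symm i,
    fun j => ?_, fun i => ?_⟩
  · have hS : (s (m j)).support ⊆ S :=
      Finset.subset_biUnion_of_mem (fun j => (s (m j)).support) (Finset.mem_univ j)
    calc m j = (s (m j)).sum fun p c => c • p := (hs (m j)).symm
      _ = ∑ p ∈ S, s (m j) p • p := Finsupp.sum_of_support_subset _ hS _ (by simp)
      _ = ∑ i, s (m j) (S.equivFin.symm i) • (S.equivFin.symm i : P) := by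
        rw [← Finset.sum_coe_sort S, ← Equiv.sum_comp S.equivFin.symm]
  · simpa [Finsupp.finsetSum_apply] using congr(s $h (S.equivFin.symm i))

lemma IsFlat.X₁_of_shortExact {S : ShortComplex (ModuleCat.{u} R)} (hS : S.ShortExact)
    (h₂ : IsFlat R S.X₂) (h₃ : IsFlat R S.X₃) : IsFlat R S.X₁ := by
  have := hS.mono_f
  have := hS.epi_g
  refine isFlat_iff_exists_factorization.2 fun j k r m h => ?_
  obtain ⟨l, a, y, hm, ha⟩ := isFlat_iff_exists_factorization.1 h₂ r (m ≫ S.f)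
    (by rw [reassoc_of% h, zero_comp])
  obtain ⟨l', b, z, hy, hb⟩ := isFlat_iff_exists_factorization.1 h₃ a (y ≫ S.g)
    (by rw [reassoc_of% hm, S.zero, comp_zero])
  let z' : finiteFree R l' ⟶ S.X₂ := Projective.factorThru z S.g
  have hker : (y - b ≫ z') ≫ S.g = 0 := by simp [z', hy]
  refine ⟨l, a, hS.exact.lift _ hker, ?_, ha⟩
  rw [← cancel_mono S.f, Category.assoc, hS.exact.lift_f, Preadditive.comp_sub, hm,
    reassoc_of% hb, zero_comp, sub_zero]

/-- Concatenation of two finite families. -/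
noncomputable def finiteFreeBiprodIso (l l' : ℕ) :
    finiteFree R l ⊞ finiteFree R l' ≅ finiteFree R (l + l') :=
  ModuleCat.biprodIsoProd _ _ ≪≫
    ((LinearEquiv.sumArrowLequivProdArrow _ _ R R).symm.trans
      (LinearEquiv.funCongrLeft R R finSumFinEquiv.symm)).toModuleIso

lemma IsFlat.X₂_of_shortExact {S : ShortComplex (ModuleCat.{u} R)} (hS : S.ShortExact)
    (h₁ : IsFlat R S.X₁) (h₃ : IsFlat R S.X₃) : IsFlat R S.X₂ := by
  have := hS.mono_f
  have := hS.epi_g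
  refine isFlat_iff_exists_factorization.2 fun j k r m h => ?_
  obtain ⟨l, a, y, hm, ha⟩ := isFlat_iff_exists_factorization.1 h₃ r (m ≫ S.g)
    (by rw [reassoc_of% h, zero_comp])
  let y' : finiteFree R l ⟶ S.X₂ := Projective.factorThru y S.g
  have hker : (m - a ≫ y') ≫ S.g = 0 := by simp [y', hm]
  obtain ⟨l', b, z, hz, hb⟩ := isFlat_iff_exists_factorization.1 h₁ r (hS.exact.lift _ hker)
    (by rw [← cancel_mono S.f, Category.assoc, hS.exact.lift_f, Preadditive.comp_sub, h,
      reassoc_of% ha, zero_comp, sub_zero, zero_comp])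
  refine ⟨l + l', biprod.lift a b ≫ (finiteFreeBiprodIso l l').hom,
    (finiteFreeBiprodIso l l').inv ≫ biprod.desc y' (z ≫ S.f), ?_, ?_⟩
  · rw [Category.assoc, Iso.hom_inv_id_assoc, biprod.lift_desc, reassoc_of% hz,
      hS.exact.lift_f, add_sub_cancel]
  · have hab : r ≫ biprod.lift a b = 0 := biprod.hom_ext _ _ (by simp [ha]) (by simp [hb])
    rw [reassoc_of% hab, zero_comp]

lemma isFlat_X_mappingCone {F K : CochainComplex (ModuleCat.{u} R) ℤ}
    (φ : F ⟶ K) (hF : ∀ n, IsFlat R (F.X n)) (hK : ∀ n, IsFlat R (K.X n)) (n : ℤ) :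
    IsFlat R ((CochainComplex.mappingCone φ).X n) :=
  IsFlat.X₂_of_shortExact
    (CochainComplex.mappingCone.triangleRotateShortComplexSplitting φ n).shortExact
    (hK n) (hF (n + 1))

end Flat

section CycleRelations

variable {R : Type u} [Ring R] {K L : CochainComplex (ModuleCat.{u} R) ℤ}

/-- Along `f : K ⟶ L`, every finite family of `n`-cycles of `K` becomes a family of combinations of
boundaries whose coefficients satisfy any prescribed linear relations among the cycles.
For `f = 𝟙 K` in all degrees this says that `K` is acyclic with flat cycles. -/
def TrivializesCycleRelations (f : K ⟶ L) (n : ℤ) : Prop :=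
  ∀ ⦃j k : ℕ⦄ (r : finiteFree R j ⟶ finiteFree R k) (z : finiteFree R k ⟶ K.X n),
    r ≫ z = 0 → z ≫ K.d n (n + 1) = 0 →
    ∃ (l : ℕ) (a : finiteFree R k ⟶ finiteFree R l) (w : finiteFree R l ⟶ L.X (n - 1)),
      z ≫ f.f n = a ≫ w ≫ L.d (n - 1) n ∧ r ≫ a = 0

lemma TrivializesCycleRelations.exactAt {n : ℤ} (h : TrivializesCycleRelations (𝟙 K) n) :
    K.ExactAt n := by
  rw [HomologicalComplex.exactAt_iff' K (n - 1) n (n + 1) (by simp) (by simp),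
    ShortComplex.moduleCat_exact_iff]
  intro (x : K.X n) (hx : K.d n (n + 1) x = 0)
  obtain ⟨l, a, w, hz, -⟩ := h (0 : finiteFree R 0 ⟶ finiteFree R 1) (finiteFreeDesc fun _ => x)
    zero_comp (by ext; simp [Fintype.linearCombination_apply, hx])
  refine ⟨w (a (Pi.single 0 1)), ?_⟩
  have hxw : x = K.d (n - 1) n (w (a (Pi.single 0 1))) := by
    simpa [Fintype.linearCombination_apply] using congr($hz (Pi.single 0 1))
  exact hxw.symm

lemma TrivializesCycleRelations.isFlat_cycles {n : ℤ} (h : TrivializesCycleRelations (𝟙 K) n) :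
    IsFlat R (K.cycles n) := by
  refine isFlat_iff_exists_factorization.2 fun j k r z hr => ?_
  obtain ⟨l, a, w, hz, ha⟩ := h r (z ≫ K.iCycles n) (by rw [reassoc_of% hr, zero_comp]) (by simp)
  exact ⟨l, a, w ≫ K.toCycles (n - 1) n, by simpa [← cancel_mono (K.iCycles n)] using hz.symm, ha⟩

lemma isFlat_X_of_exactAt (hK : ∀ n, K.ExactAt n) (hZ : ∀ n, IsFlat R (K.cycles n)) (n : ℤ) :
    IsFlat R (K.X n) := by
  let S := ShortComplex.mk (K.iCycles n) (K.toCycles n (n + 1))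
    (by simp [← cancel_mono (K.iCycles (n + 1))])
  let T := ShortComplex.mk (K.iCycles n) (K.d n (n + 1)) (by simp)
  let φ : S ⟶ T := { τ₁ := 𝟙 _, τ₂ := 𝟙 _, τ₃ := K.iCycles (n + 1) }
  have hT : T.Exact := T.exact_of_f_is_kernel (K.cyclesIsKernel n (n + 1) (by simp))
  have hS : S.ShortExact :=
    { exact := (ShortComplex.exact_iff_of_epi_of_isIso_of_mono φ).2 hT
      mono_f := inferInstanceAs (Mono (K.iCycles n))
      epi_g := Preadditive.epi_of_isZero_cokernel' _
        (K.homologyIsCokernel n (n + 1) (by simp)) (hK (n + 1)).isZero_homology }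
  exact IsFlat.X₂_of_shortExact hS (hZ n) (hZ (n + 1))

/-- Trivializations pass to the colimit because finite free modules are finitely presentable. -/
lemma TrivializesCycleRelations.of_isColimit {J : Type*} [Category* J] [EssentiallySmall.{u} J]
    [IsFiltered J] {F : J ⥤ CochainComplex (ModuleCat.{u} R) ℤ} {c : Cocone F} (hc : IsColimit c)
    {n : ℤ} (hF : ∀ i, ∃ (i' : J) (φ : i ⟶ i'), TrivializesCycleRelations (F.map φ) n) :
    TrivializesCycleRelations (𝟙 c.pt) n := by
  intro j k r z hr hz
  have : HasColimitsOfShape J (ModuleCat.{u} R) := hasColimitsOfShape_of_essentiallySmall.{u} J _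
  have hcX m := isColimitOfPreserves (HomologicalComplex.eval (ModuleCat.{u} R) _ m) hc
  have hcw {i i' : J} (φ : i ⟶ i') (m : ℤ) :
      (F.map φ).f m ≫ (c.ι.app i').f m = (c.ι.app i).f m := by
    rw [← HomologicalComplex.comp_f, c.w]
  have exists_map_eq_zero {m : ℤ} {i : J} {k : ℕ} (x : finiteFree R k ⟶ (F.obj i).X m)
      (hx : x ≫ (c.ι.app i).f m = 0) : ∃ (i' : J) (φ : i ⟶ i'), x ≫ (F.map φ).f m = 0 := by
    obtain ⟨i', φ, h⟩ :=
      exists_eq_of_preservesColimit_coyoneda_self (hcX m) x 0 (hx.trans zero_comp.symm)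
    exact ⟨i', φ, h.trans zero_comp⟩
  obtain ⟨i₀, (z₀ : _ ⟶ (F.obj i₀).X n), (rfl : z₀ ≫ (c.ι.app i₀).f n = z)⟩ :=
    exists_hom_of_preservesColimit_coyoneda (hcX n) z
  obtain ⟨i₁, φ₁, h₁⟩ := exists_map_eq_zero (z₀ ≫ (F.obj i₀).d n (n + 1)) (by simpa using hz)
  obtain ⟨i₂, φ₂, h₂⟩ := exists_map_eq_zero (r ≫ z₀ ≫ (F.map φ₁).f n)
    (by simpa [hcw] using hr)
  obtain ⟨i₃, φ₃, h₃⟩ := hF i₂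
  obtain ⟨l, a, w, hw, ha⟩ := h₃ r (z₀ ≫ (F.map φ₁).f n ≫ (F.map φ₂).f n)
    (by simpa using h₂) (by simpa using h₁ =≫ (F.map φ₂).f (n + 1))
  refine ⟨l, a, w ≫ (c.ι.app i₃).f (n - 1), ?_, ha⟩
  simpa [hcw] using hw =≫ (c.ι.app i₃).f n

end CycleRelations

section RelationComplex

variable {R : Type u} [Ring R] {K : CochainComplex (ModuleCat.{u} R) ℤ}

variable (K) in
/-- Linear relations, with coefficients `coeff`, among the differentials of a finite family `elt` of
elements of `Kⁿ`. -/
structure DifferentialRelation (n : ℤ) where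
  j : ℕ
  k : ℕ
  coeff : finiteFree R j ⟶ finiteFree R k
  elt : finiteFree R k ⟶ K.X n
  coeff_elt_d : coeff ≫ elt ≫ K.d n (n + 1) = 0

namespace DifferentialRelation

variable {n : ℤ}

lemma exists_factorization_elt_d (hK : ∀ n, IsFlat R (K.X n)) (s : DifferentialRelation K n) :
    ∃ (l : ℕ) (a : finiteFree R s.k ⟶ finiteFree R l) (y : finiteFree R l ⟶ K.X (n + 1)),
      a ≫ y = s.elt ≫ K.d n (n + 1) ∧ s.coeff ≫ a = 0 :=
  isFlat_iff_exists_factorization.1 (hK (n + 1)) _ _ s.coeff_elt_d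

variable (hK : ∀ n, IsFlat R (K.X n)) (s : DifferentialRelation K n)

/-- A trivialization `s.elt ≫ K.d n (n + 1) = s.nextCoeff hK ≫ (s.next hK).elt` of the relations
`s`. Since the left-hand side consists of cycles, it is again a system of relations among
differentials, with coefficients `s.nextCoeff hK`. -/
noncomputable def next : DifferentialRelation K (n + 1) where
  j := s.k
  k := (s.exists_factorization_elt_d hK).choose
  coeff := (s.exists_factorization_elt_d hK).choose_spec.choose
  elt := (s.exists_factorization_elt_d hK).choose_spec.choose_spec.choose
  coeff_elt_d := by
    rw [reassoc_of% (s.exists_factorization_elt_d hK).choose_spec.choose_spec.choose_spec.1,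
      K.d_comp_d, comp_zero]

/-- The coefficients of `s.next hK`, with a source that is visibly `finiteFree R s.k`. -/
noncomputable def nextCoeff : finiteFree R s.k ⟶ finiteFree R (s.next hK).k :=
  (s.next hK).coeff

lemma nextCoeff_elt : s.nextCoeff hK ≫ (s.next hK).elt = s.elt ≫ K.d n (n + 1) :=
  (s.exists_factorization_elt_d hK).choose_spec.choose_spec.choose_spec.1

lemma coeff_nextCoeff : s.coeff ≫ s.nextCoeff hK = 0 :=
  (s.exists_factorization_elt_d hK).choose_spec.choose_spec.choose_spec.2

lemma nextCoeff_nextCoeff : s.nextCoeff hK ≫ (s.next hK).nextCoeff hK = 0 :=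
  (s.next hK).coeff_nextCoeff hK

end DifferentialRelation

variable (hK : ∀ n, IsFlat R (K.X n))

/-- The degreewise free complex on the families of elements of `K` occurring in differential
relations. The differential of the generators belonging to `s` is the trivialization `s.next`. -/
noncomputable def relationComplex : CochainComplex (ModuleCat.{u} R) ℤ :=
  CochainComplex.of (fun n => ∐ fun s : DifferentialRelation K n => finiteFree R s.k)
    (fun n => Sigma.desc fun s => s.nextCoeff hK ≫
      Sigma.ι (fun s : DifferentialRelation K (n + 1) => finiteFree R s.k) (s.next hK))
    (fun _ => Sigma.hom_ext _ _ fun s => by simp [reassoc_of% s.nextCoeff_nextCoeff hK])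

namespace relationComplex

instance (n : ℤ) : Projective ((relationComplex hK).X n) :=
  inferInstanceAs (Projective (∐ fun s : DifferentialRelation K n => finiteFree R s.k))

/-- The inclusion of the generators belonging to `s`. -/
noncomputable def ι {n : ℤ} (s : DifferentialRelation K n) :
    finiteFree R s.k ⟶ (relationComplex hK).X n :=
  Sigma.ι (fun s : DifferentialRelation K n => finiteFree R s.k) s

lemma ι_d {n : ℤ} (s : DifferentialRelation K n) :
    ι hK s ≫ (relationComplex hK).d n (n + 1) = s.nextCoeff hK ≫ ι hK (s.next hK) :=
  congr(ι hK s ≫ $(CochainComplex.of_d _ _ n)).trans (Sigma.ι_desc _ _)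

/-- The evaluation of the generators in `K`. -/
noncomputable def toComplex : relationComplex hK ⟶ K where
  f n := Sigma.desc DifferentialRelation.elt
  comm' := by
    rintro n _ rfl
    refine Sigma.hom_ext _ _ fun s => ?_
    simp [relationComplex, s.nextCoeff_elt hK]

lemma ι_toComplex {n : ℤ} (s : DifferentialRelation K n) :
    ι hK s ≫ (toComplex hK).f n = s.elt :=
  Sigma.ι_desc _ _

end relationComplex

/-- The complex obtained by attaching to `K` the generators of `relationComplex hK`, shifted so that
their boundaries involve the elements of `K` they stand for. -/
noncomputable abbrev relationCone : CochainComplex (ModuleCat.{u} R) ℤ :=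
  CochainComplex.mappingCone (relationComplex.toComplex hK)

/-- The inclusion of `K` into its relation cone. -/
noncomputable abbrev toRelationCone : K ⟶ relationCone hK :=
  CochainComplex.mappingCone.inr _

/-- The generators `ι s` of the cone bound the difference between `s.elt` and a shifted family,
and the latter is annihilated by the coefficients of `s`. -/
lemma trivializesCycleRelations_toRelationCone (n : ℤ) :
    TrivializesCycleRelations (toRelationCone hK) n := by
  intro j k r z hr hz
  obtain ⟨l, a, y, rfl, ha⟩ := isFlat_iff_exists_factorization.1 (hK n) r z hr
  let s : DifferentialRelation K n := ⟨k, l, a, y, by simpa using hz⟩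
  let φ := relationComplex.toComplex hK
  let w : finiteFree R l ⟶ (relationCone hK).X (n - 1) :=
    relationComplex.ι hK s ≫ (CochainComplex.mappingCone.inl φ).v n (n - 1) (by lia)
  have hw : w ≫ (relationCone hK).d (n - 1) n = y ≫ (toRelationCone hK).f n -
      s.nextCoeff hK ≫ relationComplex.ι hK (s.next hK) ≫
        (CochainComplex.mappingCone.inl φ).v (n + 1) n (by lia) := by
    rw [Category.assoc,
      CochainComplex.mappingCone.inl_v_d φ n (n - 1) (n + 1) (by lia) (by lia),
      Preadditive.comp_sub, reassoc_of% relationComplex.ι_toComplex hK s,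
      reassoc_of% relationComplex.ι_d hK s]
  refine ⟨l, a, w, ?_, ha⟩
  rw [hw, Preadditive.comp_sub, reassoc_of% s.coeff_nextCoeff hK, zero_comp, sub_zero,
    Category.assoc]

end RelationComplex

section Tower

variable {R : Type u} [Ring R] {K : CochainComplex (ModuleCat.{u} R) ℤ}
  (hK : ∀ n, IsFlat R (K.X n))

/-- The iterated relation cones of `K`. -/
noncomputable def relationTowerObj :
    ℕ → {L : CochainComplex (ModuleCat.{u} R) ℤ // ∀ n, IsFlat R (L.X n)}
  | 0 => ⟨K, hK⟩
  | i + 1 => ⟨relationCone (relationTowerObj i).2,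
      isFlat_X_mappingCone _ (fun _ => IsFlat.of_projective _) (relationTowerObj i).2⟩

/-- The sequence of inclusions of `K` into its iterated relation cones. -/
noncomputable def relationTower : ℕ ⥤ CochainComplex (ModuleCat.{u} R) ℤ :=
  Functor.ofSequence (X := fun i => (relationTowerObj hK i).1)
    fun i => toRelationCone (relationTowerObj hK i).2

lemma relationTower_map_succ (i : ℕ) :
    (relationTower hK).map (homOfLE i.le_succ) = toRelationCone (relationTowerObj hK i).2 :=
  Functor.ofSequence_map_homOfLE_succ _ i

lemma trivializesCycleRelations_relationTower_colimit (n : ℤ) :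
    TrivializesCycleRelations (𝟙 (colimit (relationTower hK))) n :=
  .of_isColimit (colimit.isColimit (relationTower hK)) fun i => ⟨i + 1, homOfLE i.le_succ, by
    rw [relationTower_map_succ]
    exact trivializesCycleRelations_toRelationCone _ n⟩

lemma llp_epimorphisms_relationTower_ι (n : ℤ) :
    (MorphismProperty.epimorphisms _).llp ((colimit.ι (relationTower hK) 0).f n) := by
  intro A B p hp
  let E := HomologicalComplex.eval (ModuleCat.{u} R) (ComplexShape.up ℤ) n
  refine HasLiftingProperty.transfiniteComposition.hasLiftingProperty_ι_app_bot
    (hc := isColimitOfPreserves E (colimit.isColimit (relationTower hK))) fun i _ => ?_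
  change HasLiftingProperty (((relationTower hK).map (homOfLE i.le_succ)).f n) p
  rw [relationTower_map_succ]
  exact llp_epimorphisms_inr_f _ inferInstance n p hp

end Tower

lemma exists_llp_epimorphisms_exactAt_isFlat_cycles {R : Type u} [Ring R]
    {K : CochainComplex (ModuleCat.{u} R) ℤ} (hK : ∀ n, IsFlat R (K.X n)) :
    ∃ (W : CochainComplex (ModuleCat.{u} R) ℤ) (j : K ⟶ W),
      (∀ n, (MorphismProperty.epimorphisms _).llp (j.f n)) ∧ (∀ n, W.ExactAt n) ∧
        ∀ n, IsFlat R (W.cycles n) :=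
  ⟨_, colimit.ι (relationTower hK) 0, llp_epimorphisms_relationTower_ι hK,
    fun n => (trivializesCycleRelations_relationTower_colimit hK n).exactAt,
    fun n => (trivializesCycleRelations_relationTower_colimit hK n).isFlat_cycles⟩

/-- **(Neeman.)**  Let `R` be a ring and `X` a cochain complex of flat `R`-modules.
Then there exists a degreewise short exact sequence of cochain complexes
`0 → W → P → X → 0` such that every component `Pⁿ` is a projective `R`-module and `W`
is an acyclic complex of flat `R`-modules all of whose cycle modules
`Zⁿ(W) = ker(Wⁿ → W^{n+1})` are flat. -/
theorem stmt_16 (R : Type u) [Ring R]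
    (X : CochainComplex (ModuleCat.{u} R) ℤ)
    (hX : ∀ n : ℤ, IsFlat R ↥(X.X n)) :
    ∃ (W P : CochainComplex (ModuleCat.{u} R) ℤ) (f : W ⟶ P) (g : P ⟶ X)
      (w : f ≫ g = 0),
      (∀ n : ℤ, (ShortComplex.mk (f.f n) (g.f n)
        (by rw [← HomologicalComplex.comp_f, w]; rfl)).ShortExact) ∧
      (∀ n : ℤ, Projective (P.X n)) ∧
      (∀ n : ℤ, W.ExactAt n) ∧
      (∀ n : ℤ, IsFlat R ↥(W.X n)) ∧
      (∀ n : ℤ, IsFlat R ↥(W.cycles n)) := by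
  obtain ⟨P₀, p, _, hP₀⟩ := exists_epi_of_projective_X X
  have hp : (ShortComplex.mk (kernel.ι p) p (kernel.condition p)).ShortExact :=
    { exact := ShortComplex.exact_of_f_is_kernel _ (kernelIsKernel p) }
  have hK n : IsFlat R ((kernel p).X n) :=
    IsFlat.X₁_of_shortExact (hp.map_of_exact (HomologicalComplex.eval _ _ n))
      (.of_projective (P₀.X n)) (hX n)
  obtain ⟨W, j, hj, hW, hZ⟩ := exists_llp_epimorphisms_exactAt_isFlat_cycles hK
  let g : pushout (kernel.ι p) j ⟶ X := pushout.desc p 0 (by simp)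
  have hfg : pushout.inr (kernel.ι p) j ≫ g = 0 := pushout.inr_desc _ _ _
  have sq := IsPushout.of_hasPushout (kernel.ι p) j
  have hg := shortExact_of_isPushout_s16 sq hp (pushout.inl_desc _ _ _) hfg
  refine ⟨W, _, _, g, hfg, fun n => hg.map_of_exact (HomologicalComplex.eval _ _ n), fun n => ?_,
    hW, isFlat_X_of_exactAt hW hZ, hZ⟩
  exact projective_of_llp_epimorphisms (MorphismProperty.of_isPushout
    (sq.map (HomologicalComplex.eval _ _ n)) (hj n)) (hP₀ n)
end
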